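/- arXiv:2109.00053 — 2 statements merged into one kernel-verified Lean document; each statement's English description precedes it below -/
import Mathlib

section
/- Let E and F be complex vector spaces, let σ : E → F be a real-linear map, and let ∂σ(v) = (1/2)·(σ(v) − i·σ(i·v)) and ∂̄σ(v) = (1/2)·(σ(v) + i·σ(i·v)) be its complex-linear and complex-antilinear parts. Let L ⊆ E and L' ⊆ F be complex lines, i.e. L is the ℂ-span of a nonzero vector v₀ ∈ E and L' is the ℂ-span of a nonzero vector w₀ ∈ F. If σ(L) ⊆ L', then for every real number t ∈ [0,1] the map H_σ^t := ∂σ + t·∂̄σ satisfies H_σ^t(L) ⊆ L'. -/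
section CanonicalDeformation

variable {E F : Type*} [AddCommGroup F] [Module ℂ F]

section Parts

variable [SMul ℂ E]

/-- The complex-linear part `∂σ` of a real-linear map `σ`. It is encoded by its formula, as an
unbundled function, and the formula makes sense for any map `σ`. -/
noncomputable def complexLinearPart (σ : E → F) (v : E) : F :=
  (1 / 2 : ℂ) • (σ v - Complex.I • σ (Complex.I • v))

/-- The complex-antilinear part `∂̄σ` of a real-linear map `σ`, encoded like `complexLinearPart`. -/
noncomputable def complexAntilinearPart (σ : E → F) (v : E) : F :=
  (1 / 2 : ℂ) • (σ v + Complex.I • σ (Complex.I • v))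

/-- The canonical deformation `H_σ^t = ∂σ + t·∂̄σ`, which joins `∂σ` (at `t = 0`) to `σ`
(at `t = 1`). The parameter may be any complex number. -/
noncomputable def canonicalDeformation (σ : E → F) (t : ℂ) (v : E) : F :=
  complexLinearPart σ v + t • complexAntilinearPart σ v

variable {σ : E → F} {v : E} {L' : Submodule ℂ F}

theorem complexLinearPart_mem (hv : σ v ∈ L') (hIv : σ (Complex.I • v) ∈ L') :
    complexLinearPart σ v ∈ L' :=
  L'.smul_mem _ (L'.sub_mem hv (L'.smul_mem _ hIv))

theorem complexAntilinearPart_mem (hv : σ v ∈ L') (hIv : σ (Complex.I • v) ∈ L') :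
    complexAntilinearPart σ v ∈ L' :=
  L'.smul_mem _ (L'.add_mem hv (L'.smul_mem _ hIv))

theorem canonicalDeformation_mem (hv : σ v ∈ L') (hIv : σ (Complex.I • v) ∈ L') (t : ℂ) :
    canonicalDeformation σ t v ∈ L' :=
  L'.add_mem (complexLinearPart_mem hv hIv) (L'.smul_mem t (complexAntilinearPart_mem hv hIv))

end Parts

theorem canonical_deformation_preserves_lines_general [AddCommGroup E] [Module ℂ E]
    {σ : E → F} {L : Submodule ℂ E} {L' : Submodule ℂ F} (hσ : Set.MapsTo σ L L') (t : ℂ) :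
    Set.MapsTo (canonicalDeformation σ t) L L' :=
  fun _ hv => canonicalDeformation_mem (hσ hv) (hσ (L.smul_mem Complex.I hv)) t

end CanonicalDeformation

/-- Lemma `constancia`: if a real-linear map σ sends the complex
line L = ℂ·v₀ into the complex line L' = ℂ·w₀, then for every t ∈ [0,1] the
map H_σ^t = ∂σ + t·∂̄σ of the canonical deformation also sends L into L'. -/
theorem canonical_deformation_preserves_lines
    (E F : Type*) [AddCommGroup E] [AddCommGroup F]
    [Module ℂ E] [Module ℂ F] [Module ℝ E] [Module ℝ F]
    [IsScalarTower ℝ ℂ E] [IsScalarTower ℝ ℂ F]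
    (σ : E →ₗ[ℝ] F) (v₀ : E) (w₀ : F) (hv₀ : v₀ ≠ 0) (hw₀ : w₀ ≠ 0)
    (hσ : ∀ v ∈ Submodule.span ℂ ({v₀} : Set E),
      σ v ∈ Submodule.span ℂ ({w₀} : Set F)) :
    ∀ t ∈ Set.Icc (0 : ℝ) 1, ∀ v ∈ Submodule.span ℂ ({v₀} : Set E),
      (1 / 2 : ℂ) • (σ v - Complex.I • σ (Complex.I • v))
        + t • ((1 / 2 : ℂ) • (σ v + Complex.I • σ (Complex.I • v)))
        ∈ Submodule.span ℂ ({w₀} : Set F) := by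
  intro t _ v hv
  rw [← algebraMap_smul ℂ t]
  exact canonical_deformation_preserves_lines_general hσ _ hv
end

section
/- The quotient of the formal power series ring ℂ[[u,v]] in two variables by the ideal generated by u² − u·v² and u² − v³ is a complex vector space of dimension 6, i.e. dim_ℂ ℂ[[u,v]]/(u² − u·v², u² − v³) = 6. -/
open MvPowerSeries

/-!
Intersection multiplicities are additive. With `m = 2` and `n = 3`, the first curve
`u * (u - v ^ m) = 0` splits into two smooth branches. On each of them `u` is a multiple of `v`, and
`u ^ 2 - v ^ n` restricts to `v ^ n` times a unit, because `n < 2 * m`. Additivity again, now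
applied to `v ^ n`, reduces each branch to `n` copies of the transversal intersection `(u, v)`,
whose quotient ring is the coefficient ring. The exact sequences expressing additivity split, their
last terms being free.
-/

/-- The curves `f = 0` and `g = 0`, given by elements of an `R`-algebra `A`, have intersection
multiplicity `n`: the quotient of `A` by `(f, g)` is a free `R`-module of rank `n`. An explicit
isomorphism with `Fin n → R` is used rather than `Module.finrank`, which is also `0` for quotients
of infinite rank. -/
def HasIntersectionMultiplicity (R : Type*) {A : Type*} [CommRing R] [CommRing A] [Algebra R A]
    (f g : A) (n : ℕ) : Prop :=
  Nonempty ((A ⧸ Ideal.span {f, g}) ≃ₗ[R] (Fin n → R))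

theorem nonempty_linearEquiv_prod_of_exact {R M N P : Type*} [Semiring R]
    [AddCommGroup M] [AddCommGroup N] [AddCommGroup P] [Module R M] [Module R N] [Module R P]
    [Module.Projective R P] {φ : M →ₗ[R] N} {ψ : N →ₗ[R] P} (hφ : Function.Injective φ)
    (hφψ : Function.Exact φ ψ) (hψ : Function.Surjective ψ) : Nonempty (N ≃ₗ[R] M × P) := by
  obtain ⟨l, hl⟩ := Module.projective_lifting_property ψ .id hψ
  exact ⟨(hφψ.splitSurjectiveEquiv hφ ⟨l, hl⟩).1⟩

section Additivity

variable {R A : Type*} [CommRing R] [CommRing A] [Algebra R A] {f g h : A} {m n : ℕ}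

theorem span_pair_le_comap_mulLeft (f g h : A) :
    Ideal.span {g, h} ≤ Submodule.comap (LinearMap.mulLeft A f) (Ideal.span {f * g, h}) := by
  intro a ha
  obtain ⟨b, c, rfl⟩ := Ideal.mem_span_pair.1 ha
  rw [Submodule.mem_comap, LinearMap.mulLeft_apply, Ideal.mem_span_pair]
  exact ⟨b, f * c, by ring⟩

theorem span_mul_pair_le (f g h : A) : Ideal.span {f * g, h} ≤ Ideal.span {f, h} := by
  rw [Ideal.span_le, Set.pair_subset_iff]
  exact ⟨Ideal.mul_mem_right g _ (Ideal.subset_span (Set.mem_insert _ _)),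
    Ideal.subset_span (Set.mem_insert_of_mem _ rfl)⟩

variable (R) in
/-- Multiplication by `f` as an `R`-linear map `A ⧸ (g, h) → A ⧸ (f * g, h)`: the first map of the
exact sequence `A ⧸ (g, h) → A ⧸ (f * g, h) → A ⧸ (f, h) → 0` behind the additivity of intersection
multiplicities. -/
def quotientMulLeft (f g h : A) :
    (A ⧸ Ideal.span {g, h}) →ₗ[R] (A ⧸ Ideal.span {f * g, h}) :=
  (Submodule.mapQ _ _ _ (span_pair_le_comap_mulLeft f g h)).restrictScalars R

theorem quotientMulLeft_mk (f g h a : A) :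
    quotientMulLeft R f g h (Ideal.Quotient.mk _ a) = Ideal.Quotient.mk _ (f * a) := rfl

theorem injective_quotientMulLeft (hreg : ∀ a, h ∣ f * a → h ∣ a) :
    Function.Injective (quotientMulLeft R f g h) := by
  rw [injective_iff_map_eq_zero]
  intro x hx
  obtain ⟨a, rfl⟩ := Ideal.Quotient.mk_surjective x
  rw [quotientMulLeft_mk, Ideal.Quotient.eq_zero_iff_mem, Ideal.mem_span_pair] at hx
  obtain ⟨b, c, hbc⟩ := hx
  obtain ⟨d, hd⟩ := hreg (a - b * g) ⟨c, by linear_combination -hbc⟩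
  rw [Ideal.Quotient.eq_zero_iff_mem, Ideal.mem_span_pair]
  exact ⟨b, d, by linear_combination -hd⟩

theorem exact_quotientMulLeft_factor (f g h : A) :
    Function.Exact (quotientMulLeft R f g h)
      (Ideal.Quotient.factorₐ R (span_mul_pair_le f g h)).toLinearMap := by
  intro x
  obtain ⟨a, rfl⟩ := Ideal.Quotient.mk_surjective x
  rw [AlgHom.toLinearMap_apply, Ideal.Quotient.factorₐ_apply_mk, Ideal.Quotient.eq_zero_iff_mem,
    Ideal.mem_span_pair]
  constructor
  · rintro ⟨b, c, rfl⟩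
    refine ⟨Ideal.Quotient.mk _ b, ?_⟩
    rw [quotientMulLeft_mk, Ideal.Quotient.eq, Ideal.mem_span_pair]
    exact ⟨0, -c, by ring⟩
  · rintro ⟨y, hy⟩
    obtain ⟨b, rfl⟩ := Ideal.Quotient.mk_surjective y
    rw [quotientMulLeft_mk, Ideal.Quotient.eq, Ideal.mem_span_pair] at hy
    obtain ⟨c, d, hcd⟩ := hy
    exact ⟨b - c * g, -d, by linear_combination -hcd⟩

namespace HasIntersectionMultiplicity

theorem congr_span {f' g' : A} (hfg : HasIntersectionMultiplicity R f g n)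
    (hspan : Ideal.span {f, g} = Ideal.span {f', g'}) : HasIntersectionMultiplicity R f' g' n := by
  rwa [HasIntersectionMultiplicity, ← hspan]

theorem symm (hfg : HasIntersectionMultiplicity R f g n) : HasIntersectionMultiplicity R g f n :=
  hfg.congr_span Ideal.span_pair_comm

theorem of_isUnit (hf : IsUnit f) (g : A) : HasIntersectionMultiplicity R f g 0 := by
  have htop : Ideal.span {f, g} = ⊤ :=
    Ideal.eq_top_of_isUnit_mem _ (Ideal.subset_span (by simp)) hf
  have : Subsingleton (A ⧸ Ideal.span {f, g}) := Ideal.Quotient.subsingleton_iff.2 htop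
  exact ⟨0, 0, fun _ ↦ Subsingleton.elim _ _, fun _ ↦ Subsingleton.elim _ _⟩

theorem mul (hreg : ∀ a, h ∣ f * a → h ∣ a) (hf : HasIntersectionMultiplicity R f h m)
    (hg : HasIntersectionMultiplicity R g h n) :
    HasIntersectionMultiplicity R (f * g) h (m + n) := by
  obtain ⟨ef⟩ := hf
  obtain ⟨eg⟩ := hg
  have := Module.Projective.of_equiv ef.symm
  obtain ⟨e⟩ := nonempty_linearEquiv_prod_of_exact (injective_quotientMulLeft (R := R) hreg)
    (exact_quotientMulLeft_factor f g h) (Ideal.Quotient.factor_surjective (span_mul_pair_le f g h))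
  exact ⟨e ≪≫ₗ LinearEquiv.prodComm R _ _ ≪≫ₗ ef.prodCongr eg ≪≫ₗ
    (LinearEquiv.sumArrowLequivProdArrow _ _ R R).symm ≪≫ₗ
    LinearEquiv.funCongrLeft R R finSumFinEquiv.symm⟩

theorem pow (hreg : ∀ a, h ∣ f * a → h ∣ a) (hf : HasIntersectionMultiplicity R f h m) (n : ℕ) :
    HasIntersectionMultiplicity R (f ^ n) h (n * m) := by
  induction n with
  | zero => simpa using of_isUnit isUnit_one h
  | succ n ih =>
    rw [pow_succ', Nat.succ_mul, add_comm]
    exact mul hreg hf ih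

end HasIntersectionMultiplicity

theorem dvd_of_dvd_mul_of_mem_nonZeroDivisors (hf : f ∈ nonZeroDivisors A)
    (hreg : ∀ b, f ∣ h * b → f ∣ b) {a : A} (ha : h ∣ f * a) : h ∣ a := by
  obtain ⟨b, hb⟩ := ha
  obtain ⟨c, rfl⟩ := hreg b ⟨a, hb.symm⟩
  exact ⟨c, (mul_cancel_left_mem_nonZeroDivisors hf).1 (by rw [hb, mul_left_comm])⟩

end Additivity

section PowerSeries

theorem X_dvd_of_X_dvd_X_pow_mul {σ R : Type*} [Semiring R] {s t : σ} (hst : s ≠ t) {n : ℕ}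
    {a : MvPowerSeries σ R} (ha : X s ∣ X t ^ n * a) : X s ∣ a := by
  classical
  rw [X_dvd_iff] at ha ⊢
  intro d hd
  simpa [X_pow_eq, coeff_add_monomial_mul] using
    ha (Finsupp.single t n + d) (by simp [hd, hst.symm])

variable {R : Type*} [CommRing R]

theorem span_X_zero_X_one_eq_ker_constantCoeff :
    Ideal.span {X 0, X 1} = RingHom.ker (constantCoeff (σ := Fin 2) (R := R)) := by
  refine le_antisymm ?_ fun f hf ↦ ?_
  · simp [Ideal.span_le, Set.pair_subset_iff]
  · let p : MvPowerSeries (Fin 2) R := fun d ↦ if d 0 = 0 then coeff d f else 0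
    have coeff_p (d) : coeff d p = if d 0 = 0 then coeff d f else 0 := rfl
    have hX0 : X 0 ∣ f - p := X_dvd_iff.2 fun d hd ↦ by simp [coeff_p, hd]
    have hX1 : X 1 ∣ p := by
      refine X_dvd_iff.2 fun d hd ↦ ?_
      rw [coeff_p, ite_eq_right_iff]
      intro hd0
      obtain rfl : d = 0 := by ext i; fin_cases i <;> assumption
      simpa using hf
    rw [← sub_add_cancel f p]
    exact add_mem (Ideal.mem_of_dvd _ hX0 (Ideal.subset_span (by simp)))
      (Ideal.mem_of_dvd _ hX1 (Ideal.subset_span (by simp)))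

theorem hasIntersectionMultiplicity_X_zero_X_one :
    HasIntersectionMultiplicity R (X 0 : MvPowerSeries (Fin 2) R) (X 1) 1 := by
  let ε : MvPowerSeries (Fin 2) R →ₐ[R] R :=
    { constantCoeff with commutes' := fun r ↦ by simp [MvPowerSeries.algebraMap_apply] }
  have hε : Function.Surjective ε := fun r ↦ ⟨C r, constantCoeff_C r⟩
  exact ⟨(Ideal.quotientEquivAlgOfEq R span_X_zero_X_one_eq_ker_constantCoeff).toLinearEquiv ≪≫ₗ
    (Ideal.quotientKerAlgEquivOfSurjective hε).toLinearEquiv ≪≫ₗ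
    (LinearEquiv.funUnique (Fin 1) R R).symm⟩

theorem dvd_of_dvd_X_mul {σ : Type*} {s : σ} {g : MvPowerSeries σ R}
    (hreg : ∀ b, X s ∣ g * b → X s ∣ b) {a : MvPowerSeries σ R} (ha : g ∣ X s * a) : g ∣ a :=
  have hX : X s ∈ nonZeroDivisors (MvPowerSeries σ R) := X_mem_nonzeroDivisors
  dvd_of_dvd_mul_of_mem_nonZeroDivisors hX hreg ha

theorem hasIntersectionMultiplicity_X_zero_sub_X_one_mul (q : MvPowerSeries (Fin 2) R) (n : ℕ) :
    HasIntersectionMultiplicity R (X 0 - X 1 * q) (X 1 ^ n) n := by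
  have transversal : HasIntersectionMultiplicity R (X 1) (X 0 - X 1 * q) 1 :=
    hasIntersectionMultiplicity_X_zero_X_one.symm.congr_span <| by
      rw [sub_eq_add_neg, ← mul_neg, Ideal.span_pair_add_left_mul]
  have regular_X_one (b : MvPowerSeries (Fin 2) R) (hb : X 1 ∣ (X 0 - X 1 * q) * b) : X 1 ∣ b := by
    rw [sub_mul, mul_assoc, dvd_sub_left (dvd_mul_right _ _), ← pow_one (X 0)] at hb
    exact X_dvd_of_X_dvd_X_pow_mul one_ne_zero hb
  simpa only [mul_one] using (transversal.pow (fun _ ↦ dvd_of_dvd_X_mul regular_X_one) n).symm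

theorem hasIntersectionMultiplicity_X_zero_cusp (n : ℕ) :
    HasIntersectionMultiplicity R (X 0 : MvPowerSeries (Fin 2) R) (X 0 ^ 2 - X 1 ^ n) n := by
  have hline := hasIntersectionMultiplicity_X_zero_sub_X_one_mul (R := R) 0 n
  rw [mul_zero, sub_zero] at hline
  refine hline.congr_span ?_
  rw [← Ideal.span_pair_neg, ← Ideal.span_pair_add_left_mul _ _ (X 0), neg_add_eq_sub, ← sq]

theorem span_X_zero_sub_X_one_pow_eq_span_cusp {m n : ℕ} (hnm : n < 2 * m) :
    Ideal.span {X 0 - X 1 ^ m, X 1 ^ n} =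
      Ideal.span {(X 0 - X 1 ^ m : MvPowerSeries (Fin 2) R), X 0 ^ 2 - X 1 ^ n} := by
  have isUnit_factor : IsUnit (X 1 ^ (2 * m - n) - 1 : MvPowerSeries (Fin 2) R) := by
    rw [isUnit_iff_constantCoeff]
    simp [zero_pow (Nat.sub_ne_zero_of_lt hnm)]
  have cusp_eq : (X 0 ^ 2 - X 1 ^ n : MvPowerSeries (Fin 2) R) =
      X 1 ^ n * (X 1 ^ (2 * m - n) - 1) + (X 0 - X 1 ^ m) * (X 0 + X 1 ^ m) := by
    rw [mul_sub, ← pow_add, Nat.add_sub_cancel' hnm.le]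
    ring
  rw [cusp_eq, Ideal.span_pair_add_left_mul, Ideal.span_insert, Ideal.span_insert,
    Ideal.span_singleton_mul_right_unit isUnit_factor]

theorem hasIntersectionMultiplicity_X_zero_sub_X_one_pow_cusp {m n : ℕ} (hnm : n < 2 * m) :
    HasIntersectionMultiplicity R (X 0 - X 1 ^ m : MvPowerSeries (Fin 2) R)
      (X 0 ^ 2 - X 1 ^ n) n := by
  have hcurve := hasIntersectionMultiplicity_X_zero_sub_X_one_mul (R := R) (X 1 ^ (m - 1)) n
  rw [mul_pow_sub_one (by lia)] at hcurve
  exact hcurve.congr_span (span_X_zero_sub_X_one_pow_eq_span_cusp hnm)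

theorem hasIntersectionMultiplicity_sq_sub_mul_cusp {m n : ℕ} (hnm : n < 2 * m) :
    HasIntersectionMultiplicity R (X 0 ^ 2 - X 0 * X 1 ^ m : MvPowerSeries (Fin 2) R)
      (X 0 ^ 2 - X 1 ^ n) (2 * n) := by
  have regular_X_zero (b : MvPowerSeries (Fin 2) R) (hb : X 0 ∣ (X 0 ^ 2 - X 1 ^ n) * b) :
      X 0 ∣ b := by
    rw [sub_mul, sq, mul_assoc, dvd_sub_right (dvd_mul_right _ _)] at hb
    exact X_dvd_of_X_dvd_X_pow_mul zero_ne_one hb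
  rw [sq, ← mul_sub, two_mul, ← sq]
  exact .mul (fun _ ↦ dvd_of_dvd_X_mul regular_X_zero)
    (hasIntersectionMultiplicity_X_zero_cusp n)
    (hasIntersectionMultiplicity_X_zero_sub_X_one_pow_cusp hnm)

theorem finrank_quotient_power_series_eq_six_general [Nontrivial R] {m n : ℕ} (hnm : n < 2 * m) :
    Module.finrank R
      (MvPowerSeries (Fin 2) R ⧸
        Ideal.span ({X 0 ^ 2 - X 0 * X 1 ^ m, X 0 ^ 2 - X 1 ^ n} :
          Set (MvPowerSeries (Fin 2) R)))
      = 2 * n :=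
  let ⟨e⟩ := hasIntersectionMultiplicity_sq_sub_mul_cusp (R := R) hnm
  e.finrank_eq.trans (Module.finrank_fin_fun R)

end PowerSeries

/-- dim_ℂ ℂ[[u,v]]/(u² − u·v², u² − v³) = 6, the local
intersection multiplicity at the origin of the curves u² − u·v² = 0 and
u² − v³ = 0. -/
theorem finrank_quotient_power_series_eq_six :
    Module.finrank ℂ
      (MvPowerSeries (Fin 2) ℂ ⧸
        Ideal.span ({X 0 ^ 2 - X 0 * X 1 ^ 2, X 0 ^ 2 - X 1 ^ 3} :
          Set (MvPowerSeries (Fin 2) ℂ)))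
      = 6 :=
  finrank_quotient_power_series_eq_six_general (by norm_num)
end
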